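/- For every a ≥ 1, the nilHecke ring NH_a is isomorphic as a ring to the matrix ring Mat_{a!}(Λ_a) of a!×a! matrices over the ring Λ_a = ℤ[x_1,…,x_a]^{S_a} of symmetric polynomials in a variables with integer coefficients. -/

import Mathlib

/-! The nilHecke ring `NH_a`, presented by generators and relations, is
isomorphic to the ring of `a! × a!` matrices over the ring of symmetric
polynomials `Λ_a = ℤ[x_1,…,x_a]^{S_a}`.  The generators are 0-indexed:
`u i` for `i : Fin (a-1)` is the paper's `u_{i+1}` and `χ j` for `j : Fin a`
is the paper's `χ_{j+1}`. -/

noncomputable section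

/-- Generators of the nilHecke ring: `Sum.inl i` is the generator `u_{i+1}`
and `Sum.inr j` is the generator `χ_{j+1}`. -/
abbrev NHGen (a : ℕ) := Fin (a - 1) ⊕ Fin a

/-- The generator `u` (0-indexed). -/
abbrev uGen (a : ℕ) (i : Fin (a - 1)) : FreeAlgebra ℤ (NHGen a) :=
  FreeAlgebra.ι ℤ (Sum.inl i)

/-- The generator `χ` (0-indexed). -/
abbrev chiGen (a : ℕ) (j : Fin a) : FreeAlgebra ℤ (NHGen a) :=
  FreeAlgebra.ι ℤ (Sum.inr j)

/-- The defining relations of the nilHecke ring. -/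
inductive NHRel (a : ℕ) : FreeAlgebra ℤ (NHGen a) → FreeAlgebra ℤ (NHGen a) → Prop
  | u_sq (i : Fin (a - 1)) : NHRel a (uGen a i * uGen a i) 0
  | braid (i : ℕ) (h : i + 1 < a - 1) :
      NHRel a (uGen a ⟨i, by omega⟩ * uGen a ⟨i + 1, h⟩ * uGen a ⟨i, by omega⟩)
        (uGen a ⟨i + 1, h⟩ * uGen a ⟨i, by omega⟩ * uGen a ⟨i + 1, h⟩)
  | u_comm (i j : Fin (a - 1)) (h : 1 < |((i : ℕ) : ℤ) - ((j : ℕ) : ℤ)|) :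
      NHRel a (uGen a i * uGen a j) (uGen a j * uGen a i)
  | chi_comm (i j : Fin a) :
      NHRel a (chiGen a i * chiGen a j) (chiGen a j * chiGen a i)
  | u_chi_comm (i : Fin (a - 1)) (j : Fin a)
      (h1 : (j : ℕ) ≠ (i : ℕ)) (h2 : (j : ℕ) ≠ (i : ℕ) + 1) :
      NHRel a (uGen a i * chiGen a j) (chiGen a j * uGen a i)
  | u_chi (i : ℕ) (h : i + 1 < a) :
      NHRel a (uGen a ⟨i, by omega⟩ * chiGen a ⟨i, by omega⟩)
        (1 + chiGen a ⟨i + 1, h⟩ * uGen a ⟨i, by omega⟩)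
  | chi_u (i : ℕ) (h : i + 1 < a) :
      NHRel a (chiGen a ⟨i, by omega⟩ * uGen a ⟨i, by omega⟩)
        (1 + uGen a ⟨i, by omega⟩ * chiGen a ⟨i + 1, h⟩)

/-- The nilHecke ring `NH_a`. -/
abbrev NilHecke (a : ℕ) := RingQuot (NHRel a)


open MvPolynomial

theorem nh_galois_finrank (G A B : Type*) [Group G] [Finite G] [CommRing A] [CommRing B]
    [IsDomain A] [IsDomain B] [Algebra A B] [FaithfulSMul A B] [MulSemiringAction G B]
    [IsGaloisGroup G A B] : Module.finrank A B = Nat.card G := by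
  let _ := FractionRing.liftAlgebra A (FractionRing B)
  let _ := IsFractionRing.mulSemiringAction G B (FractionRing B)
  have : IsGaloisGroup G (FractionRing A) (FractionRing B) := IsGaloisGroup.toFractionRing _ _ _
  have : Algebra.IsIntegral A B := Algebra.IsInvariant.isIntegral _ _ G
  have h := IsGaloisGroup.card_eq_finrank G (FractionRing A) (FractionRing B)
  rw [h]
  exact (congrArg Cardinal.toNat (Algebra.IsAlgebraic.lift_rank_of_isFractionRing A (FractionRing A) B
    (FractionRing B))).symm |> fun h => by simpa [Module.finrank] using h

theorem nh_finrank (a : ℕ) :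
    Module.finrank ↥(symmetricSubalgebra (Fin a) ℤ) (MvPolynomial (Fin a) ℤ) = a.factorial := by
  let act : MulSemiringAction (Equiv.Perm (Fin a)) (MvPolynomial (Fin a) ℤ) :=
    { smul := fun e p => rename e p
      one_smul := fun p => by
        change rename _ p = p
        simp
      mul_smul := fun e f p => by
        change rename _ p = rename _ (rename _ p)
        rw [rename_rename]; rfl
      smul_zero := fun e => map_zero (rename e)
      smul_add := fun e => map_add (rename e)
      smul_one := fun e => map_one (rename e)
      smul_mul := fun e => map_mul (rename e) }
  have hsm : ∀ (e : Equiv.Perm (Fin a)) (p : MvPolynomial (Fin a) ℤ), e • p = rename e p :=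
    fun _ _ => rfl
  have : IsGaloisGroup (Equiv.Perm (Fin a)) ↥(symmetricSubalgebra (Fin a) ℤ)
      (MvPolynomial (Fin a) ℤ) :=
    { faithful := ⟨fun {e f} h => by
        ext i
        have := h (X i)
        simp only [hsm, rename_X] at this
        exact congrArg _ (X_injective this)⟩
      commutes := ⟨fun e l p => by
        simp only [hsm, Algebra.smul_def, map_mul]
        congr 1
        exact l.2 e⟩
      isInvariant := ⟨fun b hb => ⟨⟨b, hb⟩, rfl⟩⟩ }
  rw [nh_galois_finrank (Equiv.Perm (Fin a))]
  simp [Fintype.card_perm]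

section generic
variable {R : Type*} [Ring R]

/-- descending product `u (m+l-1) * ... * u m` -/
def nhE (u : ℕ → R) : ℕ → ℕ → R
  | _, 0 => 1
  | m, l + 1 => nhE u (m + 1) l * u m

def nhW (u : ℕ → R) : ℕ → R
  | 0 => 1
  | k + 1 => nhW u k * nhE u 0 k

/-- ascending product `u 0 * ... * u (k-1)` -/
def nhF (u : ℕ → R) : ℕ → R
  | 0 => 1
  | k + 1 => nhF u k * u k

structure NHu (n : ℕ) (u : ℕ → R) : Prop where
  sq : ∀ i, i < n → u i * u i = 0
  braid : ∀ i, i + 1 < n → u i * u (i + 1) * u i = u (i + 1) * u i * u (i + 1)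
  comm : ∀ i j, i + 1 < j → j < n → u i * u j = u j * u i

theorem nhE_succ (u : ℕ → R) (l : ℕ) : ∀ m, nhE u m (l + 1) = u (m + l) * nhE u m l := by
  induction l with
  | zero => intro m; simp [nhE]
  | succ l ih =>
    intro m
    rw [nhE, ih, nhE, mul_assoc, show m + 1 + l = m + (l + 1) by omega]

variable {n : ℕ} {u : ℕ → R}

theorem nhE_comm_low (h : NHu n u) (i : ℕ) (l : ℕ) : ∀ m, i + 1 < m → m + l ≤ n →
    nhE u m l * u i = u i * nhE u m l := by
  induction l with
  | zero => intro m _ _; simp [nhE]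
  | succ l ih =>
    intro m h1 h2
    rw [nhE, mul_assoc, ← h.comm i m h1 (by omega), ← mul_assoc, ih (m + 1) (by omega) (by omega),
      mul_assoc]

theorem nhE_shift (h : NHu n u) (i l : ℕ) : ∀ k, k = i + 2 + l → k ≤ n →
    nhE u 0 k * u (i + 1) = u i * nhE u 0 k := by
  induction l with
  | zero =>
    rintro k rfl hk
    have key : ∀ i, i + 1 < n → ∀ j, j + 1 < n → i = j → 
        nhE u 0 (i + 2) * u (j + 1) = u j * nhE u 0 (i + 2) := by
      rintro i hi _ _ rfl
      rw [nhE_succ, nhE_succ, zero_add, zero_add]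
      have hc : nhE u 0 i * u (i + 1) = u (i + 1) * nhE u 0 i := by
        have : ∀ t, t ≤ i → nhE u 0 t * u (i + 1) = u (i + 1) * nhE u 0 t := by
          intro t
          induction t with
          | zero => intro _; simp [nhE]
          | succ t ih =>
            intro ht
            rw [nhE_succ, zero_add, mul_assoc, ih (by omega), ← mul_assoc,
              h.comm t (i + 1) (by omega) hi, mul_assoc]
        exact this i le_rfl
      simp only [mul_assoc]
      rw [hc]
      simp only [← mul_assoc]
      rw [h.braid i hi]
    exact key i (by omega) i (by omega) rfl
  | succ l ih =>
    rintro k rfl hk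
    rw [show i + 2 + (l + 1) = (i + 2 + l) + 1 by omega, nhE_succ, zero_add, mul_assoc,
      ih _ rfl (by omega), ← mul_assoc, ← mul_assoc, h.comm i _ (by omega) (by omega)]

theorem nhW_mul_u (h : NHu n u) (k : ℕ) : k ≤ n + 1 → ∀ i, i + 1 < k → nhW u k * u i = 0 := by
  induction k with
  | zero => intro _ i hi; omega
  | succ k ih =>
    intro hk i hi
    rw [nhW]
    rcases i with _ | i
    · obtain ⟨k, rfl⟩ : ∃ k', k = k' + 1 := ⟨k - 1, by omega⟩
      rw [nhE, mul_assoc, mul_assoc, h.sq 0 (by omega)]; simp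
    · rw [mul_assoc, nhE_shift h i (k - (i + 2)) k (by omega) (by omega), ← mul_assoc,
        ih (by omega) i (by omega), zero_mul]

theorem nhW_comm (h : NHu n u) (k j : ℕ) (hj : j < n) : k ≤ j → nhW u k * u j = u j * nhW u k := by
  have hE : ∀ t, t < j → nhE u 0 t * u j = u j * nhE u 0 t := by
    intro t
    induction t with
    | zero => intro _; simp [nhE]
    | succ t ih =>
      intro ht
      rw [nhE_succ, zero_add, mul_assoc, ih (by omega), ← mul_assoc, ← mul_assoc,
        h.comm t j (by omega) hj]
  induction k with
  | zero => intro _; simp [nhW]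
  | succ k ih =>
    intro hk
    rw [nhW, mul_assoc, hE k (by omega), ← mul_assoc, ih (by omega), mul_assoc]

theorem nhW_left (h : NHu n u) (k : ℕ) : k ≤ n → nhW u (k + 1) = nhF u k * nhW u k := by
  induction k with
  | zero => intro _; simp [nhW, nhF, nhE]
  | succ k ih =>
    intro hk
    rw [nhW, ih (by omega), nhE_succ, zero_add, nhF, mul_assoc, ← mul_assoc (nhW u k),
      nhW_comm h k k (by omega) le_rfl, ← ih (by omega), nhW]
    simp only [mul_assoc]

theorem nhF_comm (h : NHu n u) (j : ℕ) (hj : j < n) : ∀ t, t < j →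
    nhF u t * u j = u j * nhF u t := by
  intro t
  induction t with
  | zero => intro _; simp [nhF]
  | succ t ih =>
    intro ht
    rw [nhF, mul_assoc, h.comm t j (by omega) hj, ← mul_assoc, ih (by omega), mul_assoc]

theorem nhF_shift (h : NHu n u) (i l : ℕ) : ∀ k, k = i + 2 + l → k ≤ n →
    u (i + 1) * nhF u k = nhF u k * u i := by
  induction l with
  | zero =>
    rintro k rfl hk
    simp only [nhF]
    have hc := nhF_comm h (i + 1) (by omega) i (by omega)
    rw [← mul_assoc, ← mul_assoc, ← hc]
    simp only [mul_assoc]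
    rw [← mul_assoc (u (i+1)), ← h.braid i (by omega), mul_assoc]
  | succ l ih =>
    rintro k rfl hk
    rw [show i + 2 + (l + 1) = (i + 2 + l) + 1 by omega, nhF, ← mul_assoc,
      ih _ rfl (by omega), mul_assoc, mul_assoc, h.comm i _ (by omega) (by omega)]

theorem nhu_mul_W (h : NHu n u) (k : ℕ) : k ≤ n + 1 → ∀ i, i + 1 < k → u i * nhW u k = 0 := by
  induction k with
  | zero => intro _ i hi; omega
  | succ k ih =>
    intro hk i hi
    rw [nhW_left h k (by omega)]
    rcases i with _ | i
    · obtain ⟨k, rfl⟩ : ∃ k', k = k' + 1 := ⟨k - 1, by omega⟩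
      have : ∀ k, u 0 * nhF u (k + 1) = 0 := by
        intro k
        induction k with
        | zero => simp [nhF, h.sq 0 (by omega)]
        | succ k ih => rw [nhF, ← mul_assoc, ih, zero_mul]
      rw [← mul_assoc, this, zero_mul]
    · rw [← mul_assoc, nhF_shift h i (k - (i + 2)) k (by omega) (by omega), mul_assoc,
        ih (by omega) i (by omega), mul_zero]

structure NHx (n : ℕ) (u x : ℕ → R) : Prop extends NHu n u where
  ux : ∀ i, i < n → u i * x i = 1 + x (i + 1) * u i
  uxc : ∀ i j, i < n → j ≤ n → j ≠ i → j ≠ i + 1 → u i * x j = x j * u i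

variable {x : ℕ → R}

theorem nhW_x (h : NHx n u x) (k : ℕ) (hk : k ≤ n) : nhW u k * x k = x k * nhW u k := by
  have hE : ∀ t, t < k → nhE u 0 t * x k = x k * nhE u 0 t := by
    intro t
    induction t with
    | zero => intro _; simp [nhE]
    | succ t ih =>
      intro ht
      rw [nhE_succ, zero_add, mul_assoc, ih (by omega), ← mul_assoc, ← mul_assoc,
        h.uxc t k (by omega) hk (by omega) (by omega)]
  have : ∀ t, t ≤ k → nhW u t * x k = x k * nhW u t := by
    intro t
    induction t with
    | zero => intro _; simp [nhW]
    | succ t ih =>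
      intro ht
      rw [nhW, mul_assoc, hE t (by omega), ← mul_assoc, ih (by omega), mul_assoc]
  exact this k le_rfl

theorem nhT (h : NHx n u x) (k : ℕ) (hk : k ≤ n) (l : ℕ) : ∀ m, m + (l + 1) = k →
    nhW u k * nhE u m (l + 1) * x m =
      x k * (nhW u k * nhE u m (l + 1)) + nhW u k * nhE u (m + 1) l := by
  induction l with
  | zero =>
    rintro m rfl
    simp only [nhE, one_mul, mul_one, zero_add]
    rw [mul_assoc, h.ux m (by omega), mul_add, mul_one, ← mul_assoc, nhW_x h _ hk, mul_assoc,
      add_comm]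
  | succ l ih =>
    intro m hm
    have ih' := ih (m + 1) (by omega)
    rw [nhE]
    have e1 : nhW u k * (nhE u (m + 1) (l + 1) * u m) * x m
        = nhW u k * nhE u (m + 1) (l + 1)
          + (nhW u k * nhE u (m + 1) (l + 1) * x (m + 1)) * u m := by
      simp only [mul_assoc]
      rw [h.ux m (by omega)]
      simp only [mul_add, mul_one]
    have e2 : nhW u k * nhE u (m + 1 + 1) l * u m = 0 := by
      rw [mul_assoc, nhE_comm_low h.toNHu m l _ (by omega) (by omega), ← mul_assoc,
        nhW_mul_u h.toNHu k (by omega) m (by omega), zero_mul]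
    rw [e1, ih', add_mul, e2]
    simp only [mul_assoc, add_zero]
    rw [add_comm]

theorem nhExpand (h : NHx n u x) (P : Subring R) (hP : ∀ i, i ≤ n → x i ∈ P) (k : ℕ) (hk : k ≤ n)
    (m : ℕ) : ∀ l, m + l = k → ∃ e : ℕ → R, (∀ j, e j ∈ P) ∧
      nhW u k * nhE u m l = ∑ j ∈ Finset.range (m + 1), x k ^ j * nhW u (k + 1) * e j := by
  induction m with
  | zero =>
    intro l hl
    refine ⟨fun _ => 1, fun _ => P.one_mem, ?_⟩
    obtain rfl : l = k := by omega
    simp [nhW]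
  | succ m ih =>
    intro l hl
    obtain ⟨e, he, hs⟩ := ih (l + 1) (by omega)
    have ht := nhT h k hk l m (by omega)
    refine ⟨fun j => (if j ≤ m then e j * x m else 0) - (if j = 0 then 0 else e (j - 1)), ?_, ?_⟩
    · intro j
      refine P.sub_mem ?_ ?_
      · split_ifs
        · exact P.mul_mem (he _) (hP _ (by omega))
        · exact P.zero_mem
      · split_ifs
        · exact P.zero_mem
        · exact he _
    · rw [eq_sub_iff_add_eq'.mpr ht.symm, hs]
      simp only [mul_sub, Finset.sum_sub_distrib]
      congr 1
      · rw [Finset.sum_range_succ _ (m + 1), Finset.sum_mul]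
        simp only [show ¬ (m + 1 ≤ m) by omega, if_false, mul_zero, add_zero]
        refine Finset.sum_congr rfl fun j hj => ?_
        rw [if_pos (by simpa [Nat.lt_succ_iff] using hj)]
        simp only [mul_assoc]
      · rw [Finset.sum_range_succ' _ (m + 1), Finset.mul_sum]
        simp only [if_true, mul_zero, add_zero]
        refine Finset.sum_congr rfl fun j hj => ?_
        simp [pow_succ', mul_assoc]

theorem nhUnity (h : NHx n u x) (P : Subring R) (hP : ∀ i, i ≤ n → x i ∈ P) (k : ℕ) :
    k ≤ n + 1 → ∃ p q : Fin k.factorial → R, (∀ i, p i ∈ P) ∧ (∀ i, q i ∈ P) ∧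
      1 = ∑ i, p i * nhW u k * q i := by
  induction k with
  | zero =>
    intro _
    exact ⟨fun _ => 1, fun _ => 1, fun _ => P.one_mem, fun _ => P.one_mem, by
      change (1 : R) = ∑ i : Fin 1, _
      simp [nhW]⟩
  | succ k ih =>
    intro hk
    obtain ⟨p, q, hp, hq, h1⟩ := ih (by omega)
    obtain ⟨e, he, hs⟩ := nhExpand h P hP k (by omega) k 0 (by omega)
    have hs' : nhW u k = ∑ j : Fin (k + 1), x k ^ (j : ℕ) * nhW u (k + 1) * e j := by
      rw [← Fin.sum_univ_eq_sum_range (fun j => x k ^ j * nhW u (k + 1) * e j)] at hs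
      simpa [nhE] using hs
    let eq : Fin (k + 1).factorial ≃ Fin (k + 1) × Fin k.factorial :=
      (finCongr (Nat.factorial_succ k)).trans finProdFinEquiv.symm
    refine ⟨fun i => p (eq i).2 * x k ^ ((eq i).1 : ℕ), fun i => e (eq i).1 * q (eq i).2,
      fun i => P.mul_mem (hp _) (P.pow_mem (hP _ (by omega)) _),
      fun i => P.mul_mem (he _) (hq _), ?_⟩
    rw [eq.sum_comp (fun y => p y.2 * x k ^ (y.1 : ℕ) * nhW u (k + 1) * (e y.1 * q y.2)),
      Fintype.sum_prod_type, Finset.sum_comm, h1]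
    refine Finset.sum_congr rfl fun i _ => ?_
    conv_lhs => rw [hs']
    rw [Finset.mul_sum, Finset.sum_mul]
    refine Finset.sum_congr rfl fun j _ => ?_
    simp only [mul_assoc]

end generic

section generic2
variable {R : Type*} [CommRing R] [IsDomain R]

theorem nh_braid (s t : R →+* R) (x y z : R) (D E : R → R)
    (hD : ∀ f, (x - y) * D f = f - s f) (hE : ∀ f, (y - z) * E f = f - t f)
    (ss : ∀ f, s (s f) = f) (tt : ∀ f, t (t f) = f) (st : ∀ f, s (t (s f)) = t (s (t f)))
    (sx : s x = y) (sy : s y = x) (sz : s z = z) (tx : t x = x) (ty : t y = z) (tz : t z = y)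
    (xy : x - y ≠ 0) (yz : y - z ≠ 0) (xz : x - z ≠ 0) (f : R) :
    D (E (D f)) = E (D (E f)) := by
  have sD : ∀ f, s (D f) = D f := by
    intro f
    have h := congrArg s (hD f)
    simp only [map_mul, map_sub, sx, sy, ss] at h
    apply mul_left_cancel₀ xy
    linear_combination -h - hD f
  have tE : ∀ f, t (E f) = E f := by
    intro f
    have h := congrArg t (hE f)
    simp only [map_mul, map_sub, ty, tz, tt] at h
    apply mul_left_cancel₀ yz
    linear_combination -h - hE f
  apply mul_left_cancel₀ (mul_ne_zero (mul_ne_zero xy yz) xz)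
  have a1 := hD f
  have a2 := hE (D f)
  have a3 := hD (E (D f))
  have a4 := congrArg t a1
  have a5 := congrArg s a2
  have a6 := congrArg s a4
  have b1 := hE f
  have b2 := hD (E f)
  have b3 := hE (D (E f))
  have b4 := congrArg s b1
  have b5 := congrArg t b2
  have b6 := congrArg t b4
  simp only [map_mul, map_sub, sx, sy, sz, tx, ty, tz, sD, tE, st] at a4 a5 a6 b4 b5 b6
  linear_combination (y - z) * (x - z) * a3 + (x - z) * a2 - (y - z) * a5 + a1 - a4 + a6
    - ((x - y) * (x - z) * b3 + (x - z) * b2 - (x - y) * b5 + b1 - b4 + b6)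

theorem nh_dcomm (s t : R →+* R) (d e : R) (D E : R → R)
    (hD : ∀ f, d * D f = f - s f) (hE : ∀ f, e * E f = f - t f)
    (st : ∀ f, s (t f) = t (s f)) (se : s e = e) (td : t d = d)
    (d0 : d ≠ 0) (e0 : e ≠ 0) (f : R) :
    D (E f) = E (D f) := by
  apply mul_left_cancel₀ (mul_ne_zero d0 e0)
  have a1 := hD (E f)
  have a2 := hE f
  have a3 := congrArg s a2
  have b1 := hE (D f)
  have b2 := hD f
  have b3 := congrArg t b2
  simp only [map_mul, map_sub, se, td, st] at a3 b3
  linear_combination e * a1 + a2 - a3 - (d * b1 + b2 - b3)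

theorem nh_comm_hom {N : Type*} [Ring N] {a : ℕ} (x : Fin a → N)
    (hx : ∀ i j, x i * x j = x j * x i) :
    ∃ φ : MvPolynomial (Fin a) ℤ →+* N, ∀ j, φ (X j) = x j := by
  let P := Subring.closure (Set.range x)
  let _ : CommRing P := Subring.closureCommRingOfComm (by
    rintro _ ⟨i, rfl⟩ _ ⟨j, rfl⟩
    exact hx i j)
  refine ⟨(P.subtype).comp (eval₂Hom (Int.castRingHom P)
    (fun j => (⟨x j, Subring.subset_closure ⟨j, rfl⟩⟩ : P))), ?_⟩
  intro j
  simp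
end generic2

section poly
variable {a : ℕ}

abbrev nhS (i j : Fin a) : MvPolynomial (Fin a) ℤ →+* MvPolynomial (Fin a) ℤ :=
  (rename (Equiv.swap i j) : MvPolynomial (Fin a) ℤ →ₐ[ℤ] MvPolynomial (Fin a) ℤ).toRingHom

theorem nhS_X (i j k : Fin a) : nhS i j (X k) = X (Equiv.swap i j k) := by
  simp [nhS]

theorem nhS_nhS (i j : Fin a) (f) : nhS i j (nhS i j f) = f := by
  simp [nhS, rename_rename, ← Equiv.coe_trans]

theorem nh_dvd (i j : Fin a) (f : MvPolynomial (Fin a) ℤ) :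
    ∃ g, (X i - X j) * g = f - nhS i j f := by
  induction f using MvPolynomial.induction_on with
  | C c => exact ⟨0, by simp [nhS]⟩
  | add p q hp hq =>
    obtain ⟨g, hg⟩ := hp
    obtain ⟨h, hh⟩ := hq
    exact ⟨g + h, by rw [mul_add, hg, hh, map_add]; ring⟩
  | mul_X p k hp =>
    obtain ⟨g, hg⟩ := hp
    have : ∃ e : MvPolynomial (Fin a) ℤ, (X i - X j) * e = X k - X (Equiv.swap i j k) := by
      rw [Equiv.swap_apply_def]
      split_ifs with h1 h2
      · subst h1; exact ⟨1, by ring⟩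
      · subst h2; exact ⟨-1, by ring⟩
      · exact ⟨0, by ring⟩
    obtain ⟨e, he⟩ := this
    refine ⟨g * X k + nhS i j p * e, ?_⟩
    rw [map_mul, nhS_X]
    linear_combination X k * hg + nhS i j p * he

theorem nhX_ne {i j : Fin a} (h : i ≠ j) : (X i - X j : MvPolynomial (Fin a) ℤ) ≠ 0 :=
  sub_ne_zero.mpr fun h' => h (X_injective h')

def nhD (i j : Fin a) (h : i ≠ j) :
    MvPolynomial (Fin a) ℤ →ₗ[↥(symmetricSubalgebra (Fin a) ℤ)] MvPolynomial (Fin a) ℤ where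
  toFun f := (nh_dvd i j f).choose
  map_add' f g := by
    apply mul_left_cancel₀ (nhX_ne h)
    rw [mul_add, (nh_dvd i j f).choose_spec, (nh_dvd i j g).choose_spec,
      (nh_dvd i j (f + g)).choose_spec, map_add]
    ring
  map_smul' l f := by
    apply mul_left_cancel₀ (nhX_ne h)
    have hl : nhS i j (l : MvPolynomial (Fin a) ℤ) = l := l.2 _
    rw [(nh_dvd i j _).choose_spec, RingHom.id_apply, Algebra.smul_def, Algebra.smul_def]
    change (l : MvPolynomial (Fin a) ℤ) * f - nhS i j ((l : MvPolynomial (Fin a) ℤ) * f) =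
      _ * ((l : MvPolynomial (Fin a) ℤ) * _)
    rw [map_mul, hl]
    linear_combination -(l : MvPolynomial (Fin a) ℤ) * (nh_dvd i j f).choose_spec

theorem nhD_spec (i j : Fin a) (h : i ≠ j) (f) : (X i - X j) * nhD i j h f = f - nhS i j f :=
  (nh_dvd i j f).choose_spec

theorem nhD_leib (i j : Fin a) (h : i ≠ j) (f g) :
    nhD i j h (f * g) = nhD i j h f * g + nhS i j f * nhD i j h g := by
  apply mul_left_cancel₀ (nhX_ne h)
  rw [nhD_spec, map_mul]
  linear_combination -g * nhD_spec i j h f - nhS i j f * nhD_spec i j h g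

theorem nhD_X_left (i j : Fin a) (h : i ≠ j) : nhD i j h (X i) = 1 := by
  apply mul_left_cancel₀ (nhX_ne h)
  rw [nhD_spec, nhS_X]; simp

theorem nhD_X_right (i j : Fin a) (h : i ≠ j) : nhD i j h (X j) = -1 := by
  apply mul_left_cancel₀ (nhX_ne h)
  rw [nhD_spec, nhS_X]; simp

theorem nhD_X_other (i j k : Fin a) (h : i ≠ j) (h1 : k ≠ i) (h2 : k ≠ j) :
    nhD i j h (X k) = 0 := by
  apply mul_left_cancel₀ (nhX_ne h)
  rw [nhD_spec, nhS_X, Equiv.swap_apply_of_ne_of_ne h1 h2]; simp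

theorem nhD_C (i j : Fin a) (h : i ≠ j) (c) : nhD i j h (C c) = 0 := by
  apply mul_left_cancel₀ (nhX_ne h)
  rw [nhD_spec]; simp [nhS]

theorem nhD_sq (i j : Fin a) (h : i ≠ j) (f) : nhD i j h (nhD i j h f) = 0 := by
  have e := congrArg (nhS i j) (nhD_spec i j h f)
  rw [map_mul, map_sub, map_sub, nhS_nhS, nhS_X, nhS_X, Equiv.swap_apply_left,
    Equiv.swap_apply_right] at e
  apply mul_left_cancel₀ (nhX_ne h)
  apply mul_left_cancel₀ (nhX_ne h)
  linear_combination (X i - X j) * nhD_spec i j h (nhD i j h f) + nhD_spec i j h f + e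

theorem nhD_braid (i j k : Fin a) (hij : i ≠ j) (hjk : j ≠ k) (hik : i ≠ k) (f) :
    nhD i j hij (nhD j k hjk (nhD i j hij f)) = nhD j k hjk (nhD i j hij (nhD j k hjk f)) := by
  refine nh_braid (nhS i j) (nhS j k) (X i) (X j) (X k) _ _ (nhD_spec _ _ _) (nhD_spec _ _ _)
    (nhS_nhS _ _) (nhS_nhS _ _) ?_ ?_ ?_ ?_ ?_ ?_ ?_ (nhX_ne hij) (nhX_ne hjk) (nhX_ne hik) f
  · intro f
    have h1 : Equiv.swap i j * Equiv.swap j k * Equiv.swap i j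
        = Equiv.swap j k * Equiv.swap i j * Equiv.swap j k := by
      rw [Equiv.swap_mul_swap_mul_swap hij hik, Equiv.swap_comm i j, Equiv.swap_comm j k,
        Equiv.swap_mul_swap_mul_swap hjk.symm hik.symm, Equiv.swap_comm]
    have h2 := congrArg (fun e : Equiv.Perm (Fin a) => rename e f) h1
    simpa [nhS, rename_rename, Equiv.Perm.coe_mul, Function.comp_assoc] using h2
  all_goals rw [nhS_X]
  · simp
  · simp
  · rw [Equiv.swap_apply_of_ne_of_ne hik.symm hjk.symm]
  · rw [Equiv.swap_apply_of_ne_of_ne hij hik]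
  · simp
  · simp

theorem nhD_comm (i j k l : Fin a) (hij : i ≠ j) (hkl : k ≠ l) (h1 : i ≠ k) (h2 : i ≠ l)
    (h3 : j ≠ k) (h4 : j ≠ l) (f) :
    nhD i j hij (nhD k l hkl f) = nhD k l hkl (nhD i j hij f) := by
  refine nh_dcomm (nhS i j) (nhS k l) (X i - X j) (X k - X l) _ _ (nhD_spec _ _ _) (nhD_spec _ _ _)
    ?_ ?_ ?_ (nhX_ne hij) (nhX_ne hkl) f
  · intro f
    have h1 : Equiv.swap i j * Equiv.swap k l = Equiv.swap k l * Equiv.swap i j := by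
      apply Equiv.Perm.Disjoint.commute
      intro x
      by_cases hx : x = i ∨ x = j
      · right
        rcases hx with rfl | rfl
        · exact Equiv.swap_apply_of_ne_of_ne h1 h2
        · exact Equiv.swap_apply_of_ne_of_ne h3 h4
      · left
        push Not at hx
        exact Equiv.swap_apply_of_ne_of_ne hx.1 hx.2
    have h2 := congrArg (fun e : Equiv.Perm (Fin a) => rename e f) h1
    simpa [nhS, rename_rename, Equiv.Perm.coe_mul] using h2
  · rw [map_sub, nhS_X, nhS_X, Equiv.swap_apply_of_ne_of_ne h1.symm h3.symm,
      Equiv.swap_apply_of_ne_of_ne h2.symm h4.symm]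
  · rw [map_sub, nhS_X, nhS_X, Equiv.swap_apply_of_ne_of_ne h1 h2,
      Equiv.swap_apply_of_ne_of_ne h3 h4]

theorem nh_sym (g : MvPolynomial (Fin a) ℤ)
    (h : ∀ i (hi : i + 1 < a), nhS (⟨i, by omega⟩ : Fin a) ⟨i + 1, hi⟩ g = g) :
    g ∈ symmetricSubalgebra (Fin a) ℤ := by
  intro e
  rcases a with _ | m
  · rw [Subsingleton.elim e 1]; simp
  · have he : e ∈ Submonoid.closure (Set.range fun i : Fin m ↦ Equiv.swap i.castSucc i.succ) := by
      rw [Equiv.Perm.mclosure_swap_castSucc_succ]; trivial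
    induction he using Submonoid.closure_induction with
    | mem x hx =>
      obtain ⟨i, rfl⟩ := hx
      exact h i (by omega)
    | one => simp
    | mul x y _ _ hx hy =>
      rw [Equiv.Perm.coe_mul, ← rename_rename, hy, hx]
end poly

section final
variable (a : ℕ)

abbrev nhEnd := Module.End ↥(symmetricSubalgebra (Fin a) ℤ) (MvPolynomial (Fin a) ℤ)

def nhGenMap : NHGen a → nhEnd a
  | Sum.inl i => nhD (⟨i, by omega⟩ : Fin a) ⟨i + 1, by omega⟩ (by simp)
  | Sum.inr j => LinearMap.mulLeft _ (X j)

def nhFree : FreeAlgebra ℤ (NHGen a) →+* nhEnd a := (FreeAlgebra.lift ℤ (nhGenMap a)).toRingHom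

theorem nhFree_u (i : Fin (a - 1)) : nhFree a (uGen a i) =
    nhD (⟨i, by omega⟩ : Fin a) ⟨i + 1, by omega⟩ (by simp) := by
  simp [nhFree, nhGenMap]

theorem nhFree_chi (j : Fin a) : nhFree a (chiGen a j) = LinearMap.mulLeft _ (X j) := by
  simp [nhFree, nhGenMap]

theorem nhFree_rel : ∀ ⦃x y⦄, NHRel a x y → nhFree a x = nhFree a y := by
  intro x y h
  induction h with
  | u_sq i =>
    rw [map_mul, map_zero, nhFree_u]
    exact LinearMap.ext fun f => nhD_sq _ _ _ f
  | braid i h =>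
    simp only [map_mul, nhFree_u]
    exact LinearMap.ext fun f => nhD_braid _ _ _ _ _ (by
      simp only [ne_eq, Fin.mk.injEq]; omega) f
  | u_comm i j h =>
    simp only [map_mul, nhFree_u]
    have h' : (i : ℕ) + 1 < j ∨ (j : ℕ) + 1 < i := by
      rcases lt_abs.mp h with h | h
      · right; omega
      · left; omega
    refine LinearMap.ext fun f => nhD_comm _ _ _ _ _ _ ?_ ?_ ?_ ?_ f <;>
    · simp only [ne_eq, Fin.mk.injEq]
      omega
  | chi_comm i j =>
    simp only [map_mul, nhFree_chi]
    refine LinearMap.ext fun f => ?_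
    simp only [Module.End.mul_apply, LinearMap.mulLeft_apply]
    ring
  | u_chi_comm i j h1 h2 =>
    simp only [map_mul, nhFree_chi, nhFree_u]
    refine LinearMap.ext fun f => ?_
    simp only [Module.End.mul_apply, LinearMap.mulLeft_apply]
    have h1' : j ≠ ⟨i, by omega⟩ := fun h => h1 (congrArg Fin.val h)
    have h2' : j ≠ ⟨i + 1, by omega⟩ := fun h => h2 (congrArg Fin.val h)
    rw [nhD_leib, nhD_X_other _ _ _ _ h1' h2', nhS_X, Equiv.swap_apply_of_ne_of_ne h1' h2']
    ring
  | u_chi i h =>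
    simp only [map_mul, map_add, map_one, nhFree_chi, nhFree_u]
    refine LinearMap.ext fun f => ?_
    simp only [Module.End.mul_apply, LinearMap.mulLeft_apply, LinearMap.add_apply,
      Module.End.one_apply]
    rw [nhD_leib, nhD_X_left, nhS_X, Equiv.swap_apply_left, one_mul]
  | chi_u i h =>
    simp only [map_mul, map_add, map_one, nhFree_chi, nhFree_u]
    refine LinearMap.ext fun f => ?_
    simp only [Module.End.mul_apply, LinearMap.mulLeft_apply, LinearMap.add_apply,
      Module.End.one_apply]
    rw [nhD_leib, nhD_X_right, nhS_X, Equiv.swap_apply_right]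
    ring

def nhRho : NilHecke a →+* nhEnd a := RingQuot.lift ⟨nhFree a, nhFree_rel a⟩

abbrev nhMk : FreeAlgebra ℤ (NHGen a) →+* NilHecke a := RingQuot.mkRingHom (NHRel a)

theorem nhRho_mk (x) : nhRho a (nhMk a x) = nhFree a x :=
  RingQuot.lift_mkRingHom_apply _ _ _

def nhU (i : ℕ) : NilHecke a := if h : i < a - 1 then nhMk a (uGen a ⟨i, h⟩) else 0
def nhX (i : ℕ) : NilHecke a := if h : i < a then nhMk a (chiGen a ⟨i, h⟩) else 0

theorem nhU_eq (i : ℕ) (h : i < a - 1) : nhU a i = nhMk a (uGen a ⟨i, h⟩) := dif_pos h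
theorem nhX_eq (i : ℕ) (h : i < a) : nhX a i = nhMk a (chiGen a ⟨i, h⟩) := dif_pos h

theorem nhRel_mk {x y} (h : NHRel a x y) : nhMk a x = nhMk a y := RingQuot.mkRingHom_rel h

theorem nhNHx (ha : 1 ≤ a) : NHx (a - 1) (nhU a) (nhX a) where
  sq i hi := by
    rw [nhU_eq a i hi, ← map_mul, nhRel_mk a (.u_sq _), map_zero]
  braid i hi := by
    rw [nhU_eq a i (by omega), nhU_eq a (i + 1) hi]
    simp only [← map_mul]
    exact nhRel_mk a (.braid i hi)
  comm i j hij hj := by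
    rw [nhU_eq a i (by omega), nhU_eq a j hj]
    simp only [← map_mul]
    refine nhRel_mk a (.u_comm _ _ ?_)
    apply lt_abs.mpr
    right
    simp only
    omega
  ux i hi := by
    rw [nhU_eq a i (by omega), nhX_eq a i (by omega), nhX_eq a (i + 1) (by omega)]
    rw [← map_mul, ← map_mul, ← map_one (nhMk a), ← map_add]
    exact nhRel_mk a (.u_chi i (by omega))
  uxc i j hi hj h1 h2 := by
    rw [nhU_eq a i (by omega), nhX_eq a j (by omega)]
    simp only [← map_mul]
    exact nhRel_mk a (.u_chi_comm _ _ h1 h2)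

theorem nh_slide (φ : MvPolynomial (Fin a) ℤ →+* NilHecke a)
    (hφ : ∀ j, φ (X j) = nhMk a (chiGen a j)) (i : Fin (a - 1)) (f : MvPolynomial (Fin a) ℤ) :
    nhMk a (uGen a i) * φ f =
      φ (nhD (⟨i, by omega⟩ : Fin a) ⟨i + 1, by omega⟩ (by simp) f) +
      φ (nhS (⟨i, by omega⟩ : Fin a) ⟨i + 1, by omega⟩ f) * nhMk a (uGen a i) := by
  induction f using MvPolynomial.induction_on with
  | C c =>
    rw [nhD_C, map_zero, zero_add]
    have : nhS (⟨i, by omega⟩ : Fin a) ⟨i + 1, by omega⟩ (C c) = C c := by simp [nhS]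
    rw [this]
    have h2 : φ (C c) = (c : NilHecke a) := by
      rw [show (C c : MvPolynomial (Fin a) ℤ) = (c : MvPolynomial (Fin a) ℤ) by simp, map_intCast]
    rw [h2]
    exact (Int.cast_commute c _).symm.eq
  | add p q hp hq =>
    simp only [map_add, mul_add, add_mul, hp, hq]
    abel
  | mul_X p k hp =>
    have key : nhMk a (uGen a i) * φ (X k) =
      φ (nhD (⟨i, by omega⟩ : Fin a) ⟨i + 1, by omega⟩ (by simp) (X k)) +
      φ (nhS (⟨i, by omega⟩ : Fin a) ⟨i + 1, by omega⟩ (X k)) * nhMk a (uGen a i) := by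
      rw [nhS_X]
      by_cases h1 : k = ⟨i, by omega⟩
      · subst h1
        rw [nhD_X_left, Equiv.swap_apply_left, map_one, hφ, hφ, ← map_mul, ← map_mul,
          ← map_one (nhMk a), ← map_add]
        exact nhRel_mk a (.u_chi i (by omega))
      by_cases h2 : k = ⟨i + 1, by omega⟩
      · subst h2
        rw [nhD_X_right, Equiv.swap_apply_right, map_neg, map_one, hφ, hφ]
        have := nhRel_mk a (.chi_u i (by omega))
        rw [map_add, map_mul, map_mul, map_one] at this
        rw [this]
        simp
      · rw [nhD_X_other _ _ _ _ h1 h2, Equiv.swap_apply_of_ne_of_ne h1 h2, hφ, map_zero, zero_add,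
          ← map_mul, ← map_mul]
        exact nhRel_mk a (.u_chi_comm _ _ (fun h => h1 (Fin.ext h)) (fun h => h2 (Fin.ext h)))
    rw [map_mul φ, ← mul_assoc, hp, add_mul, mul_assoc, key, nhD_leib, map_mul (nhS _ _)]
    simp only [map_add, map_mul, mul_add, mul_assoc, add_assoc]

theorem nh_act (ha : 1 ≤ a) (φ : MvPolynomial (Fin a) ℤ →+* NilHecke a)
    (hφ : ∀ j, φ (X j) = nhMk a (chiGen a j)) (n : NilHecke a) :
    ∀ f, n * φ f * nhW (nhU a) a = φ (nhRho a n f) * nhW (nhU a) a := by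
  obtain ⟨y, rfl⟩ := RingQuot.mkRingHom_surjective (NHRel a) n
  induction y using FreeAlgebra.induction with
  | grade0 c =>
    intro f
    have h1 : RingQuot.mkRingHom (NHRel a) (algebraMap ℤ _ c) = (c : NilHecke a) := by simp
    rw [h1, map_intCast, Module.End.intCast_apply, map_zsmul, zsmul_eq_mul]
  | grade1 g =>
    intro f
    rw [nhRho_mk]
    rcases g with i | j
    · have h1 := nh_slide a φ hφ i f
      have h2 := nhu_mul_W (nhNHx a ha).toNHu a (by omega) i (by omega)
      rw [nhU_eq a i i.2] at h2
      change nhMk a (uGen a i) * _ * _ = φ (nhFree a (uGen a i) f) * _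
      rw [h1, nhFree_u, add_mul, mul_assoc _ _ (nhW _ _)]
      rw [h2, mul_zero, add_zero]
    · change nhMk a (chiGen a j) * _ * _ = φ (nhFree a (chiGen a j) f) * _
      rw [nhFree_chi, LinearMap.mulLeft_apply, map_mul, hφ]
  | mul x y hx hy =>
    intro f
    rw [map_mul, map_mul, Module.End.mul_apply, ← hx, mul_assoc, mul_assoc, ← mul_assoc _ (φ f), hy,
      mul_assoc]
  | add x y hx hy =>
    intro f
    rw [map_add, map_add, LinearMap.add_apply, map_add, add_mul, add_mul, add_mul, hx, hy]

theorem nhRho_phi (φ : MvPolynomial (Fin a) ℤ →+* NilHecke a)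
    (hφ : ∀ j, φ (X j) = nhMk a (chiGen a j)) (f g : MvPolynomial (Fin a) ℤ) :
    nhRho a (φ f) g = f * g := by
  induction f using MvPolynomial.induction_on generalizing g with
  | C c =>
    rw [show (C c : MvPolynomial (Fin a) ℤ) = (c : MvPolynomial (Fin a) ℤ) by simp, map_intCast,
        map_intCast, Module.End.intCast_apply, zsmul_eq_mul]
  | add p q hp hq => rw [map_add, map_add, LinearMap.add_apply, hp, hq, add_mul]
  | mul_X p k hp =>
    rw [map_mul, map_mul, Module.End.mul_apply, hp, hφ, nhRho_mk, nhFree_chi,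
      LinearMap.mulLeft_apply, mul_assoc]

theorem nhW_sym (ha : 1 ≤ a) (f : MvPolynomial (Fin a) ℤ) :
    nhRho a (nhW (nhU a) a) f ∈ symmetricSubalgebra (Fin a) ℤ := by
  apply nh_sym
  intro i hi
  have h2 := nhu_mul_W (nhNHx a ha).toNHu a (by omega) i (by omega)
  rw [nhU_eq a i (by omega)] at h2
  have h3 := congrArg (fun F => nhRho a F f) h2
  simp only [map_mul, map_zero, Module.End.mul_apply, LinearMap.zero_apply] at h3
  rw [nhRho_mk, nhFree_u] at h3
  have h4 := nhD_spec (⟨i, by omega⟩ : Fin a) ⟨i + 1, by omega⟩ (by simp)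
    (nhRho a (nhW (nhU a) a) f)
  rw [h3, mul_zero] at h4
  exact (sub_eq_zero.mp h4.symm).symm

end final

set_option synthInstance.maxHeartbeats 1000000 in
theorem stmt6 (a : ℕ) (ha : 1 ≤ a) :
    Nonempty (NilHecke a ≃+*
      Matrix (Fin (Nat.factorial a)) (Fin (Nat.factorial a))
        ↥(MvPolynomial.symmetricSubalgebra (Fin a) ℤ)) := by
  obtain ⟨φ, hφ⟩ := nh_comm_hom (fun j => nhMk a (chiGen a j)) (by
    intro i j
    simp only [← map_mul]
    exact nhRel_mk a (.chi_comm i j))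
  obtain ⟨p', q', hp, hq, h1⟩ := nhUnity (nhNHx a ha) φ.range (by
    intro i hi
    rw [nhX_eq a i (by omega)]
    exact ⟨X ⟨i, by omega⟩, hφ _⟩) a (by omega)
  choose p hp using hp
  choose q hq using hq
  have hdec : ∀ f : MvPolynomial (Fin a) ℤ,
      f = ∑ i, p i * nhRho a (nhW (nhU a) a) (q i * f) := by
    intro f
    have h := congrArg (fun F => nhRho a F f) h1
    simp only [map_one, map_sum, map_mul, Module.End.one_apply, LinearMap.sum_apply,
      Module.End.mul_apply, ← hp, ← hq] at h
    simpa only [nhRho_phi a φ hφ] using h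
  have hdec' : ∀ f : MvPolynomial (Fin a) ℤ,
      f = ∑ i, (⟨_, nhW_sym a ha (q i * f)⟩ : ↥(symmetricSubalgebra (Fin a) ℤ)) • p i := by
    intro f
    conv_lhs => rw [hdec f]
    refine Finset.sum_congr rfl fun i _ => ?_
    rw [mul_comm, Algebra.smul_def]
    rfl
  have hinj : Function.Injective (nhRho a) := by
    rw [injective_iff_map_eq_zero]
    intro n hn
    rw [← mul_one n, h1, Finset.mul_sum]
    refine Finset.sum_eq_zero fun i _ => ?_
    rw [← hp, ← mul_assoc, ← mul_assoc, nh_act a ha φ hφ, hn]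
    simp
  have hsurj : Function.Surjective (nhRho a) := by
    intro F
    refine ⟨∑ i, φ (F (p i)) * nhW (nhU a) a * φ (q i), LinearMap.ext fun f => ?_⟩
    conv_rhs => rw [hdec' f]
    simp only [map_sum, map_mul, LinearMap.sum_apply, Module.End.mul_apply, map_smul,
      nhRho_phi a φ hφ]
    refine Finset.sum_congr rfl fun i _ => ?_
    rw [mul_comm, Algebra.smul_def]
    rfl
  have hspan : ⊤ ≤ Submodule.span ↥(symmetricSubalgebra (Fin a) ℤ) (Set.range p) := by
    intro f _
    rw [hdec' f]
    exact Submodule.sum_mem _ fun i _ => Submodule.smul_mem _ _ (Submodule.subset_span ⟨i, rfl⟩)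
  let b := basisOfTopLeSpanOfCardEqFinrank p hspan (by rw [nh_finrank, Fintype.card_fin])
  exact ⟨(RingEquiv.ofBijective (nhRho a) ⟨hinj, hsurj⟩).trans
    (LinearMap.toMatrixAlgEquiv b).toRingEquiv⟩
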